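/- (Separation lemma in high dimensions) Let d ≥ 5. There exists a constant c₁ > 0, depending only on d, such that for all n ≥ 1, P( Z_n ≥ n/2 | F_n ) ≥ c₁, where S and S' are independent simple random walks on Z^d started at 0, T_n and T'_n are their respective first exit times from the cube Q_n, F_n is the event that S[1,T_n] and S'[1,T'_n] are disjoint, and Z_n = max( dist(S(T_n), S'[1,T'_n]), dist(S'(T'_n), S[0,T_n]) ). -/

import Mathlib

open MeasureTheory
open scoped ENNReal Classical

namespace USFPaper

/-- Vertices of the nearest-neighbour integer lattice `ℤ^d`. -/
abbrev V (d : ℕ) := Fin d → ℤ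

variable {d : ℕ}

/-- Nearest-neighbour adjacency in `ℤ^d`. -/
def adj (x y : V d) : Prop := (∑ i, |x i - y i|) = 1

/-- The cube `Q(x,r) = { y : ‖x - y‖_∞ ≤ r }`. -/
def cube (x : V d) (r : ℕ) : Set (V d) := { y | ∀ i, |y i - x i| ≤ (r : ℤ) }

/-- Inner boundary `∂ᵢA` of a set `A`. -/
def innerBdry (A : Set (V d)) : Set (V d) := { x | x ∈ A ∧ ∃ y, adj x y ∧ y ∉ A }

/-- Euclidean distance on `ℤ^d`. -/
noncomputable def eudist (x y : V d) : ℝ := Real.sqrt (∑ i, ((x i : ℝ) - (y i : ℝ)) ^ 2)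

/-- The `k`-th coordinate unit vector. -/
def unitVec (k : ℕ) : V d := fun i => if (i : ℕ) = k then 1 else 0

/-- `μ` is the law of simple random walk on `ℤ^d` started at `x`, as a probability
measure on path space: every nearest-neighbour cylinder of length `n` starting at `x`
has probability `(2d)⁻ⁿ`. -/
def IsSRWLaw (μ : Measure (ℕ → V d)) (x : V d) : Prop :=
  IsProbabilityMeasure μ ∧
  ∀ (n : ℕ) (γ : ℕ → V d), γ 0 = x → (∀ i < n, adj (γ i) (γ (i + 1))) →
    μ { ω | ∀ i ≤ n, ω i = γ i } = (2 * (d : ℝ≥0∞))⁻¹ ^ n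

/-- First exit time `τ_A` from `A`, valued in `ℕ∞` (`⊤` if the path never leaves `A`). -/
noncomputable def exitTimeE (A : Set (V d)) (ω : ℕ → V d) : ENat :=
  if h : ∃ j, ω j ∉ A then (Nat.find h : ENat) else ⊤

/-- First hitting time `T_A` of `A`, valued in `ℕ∞`. -/
noncomputable def hitTimeE (A : Set (V d)) (ω : ℕ → V d) : ENat :=
  if h : ∃ j, ω j ∈ A then (Nat.find h : ENat) else ⊤

/-- First positive hitting time `T⁺_A` of `A`, valued in `ℕ∞`. -/
noncomputable def hitTimePosE (A : Set (V d)) (ω : ℕ → V d) : ENat :=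
  if h : ∃ j, 1 ≤ j ∧ ω j ∈ A then (Nat.find h : ENat) else ⊤

/-- First exit time from `A` as a natural number (junk value `0` if the path never exits). -/
noncomputable def exitTime (A : Set (V d)) (ω : ℕ → V d) : ℕ := (exitTimeE A ω).toNat

/-- Index of the first hit of `A` (junk value `0` if `A` is never hit). -/
noncomputable def hitIdx (A : Set (V d)) (γ : ℕ → V d) : ℕ := (hitTimeE A γ).toNat

/-- First index `≥ t` at which the path lies in `A` (junk value `t`). -/
noncomputable def hitIdxFrom (A : Set (V d)) (t : ℕ) (γ : ℕ → V d) : ℕ :=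
  if h : ∃ j, t ≤ j ∧ γ j ∈ A then Nat.find h else t

/-- The path frozen at its first exit from `D`. -/
noncomputable def stopAt (D : Set (V d)) (ω : ℕ → V d) : ℕ → V d :=
  fun j => if (j : ENat) ≤ exitTimeE D ω then ω j else ω (exitTime D ω)

/-- Time of the last visit of the path to the point `ω t`, at or after time `t`
(junk value if there are infinitely many such visits). -/
noncomputable def lastVisit (ω : ℕ → V d) (t : ℕ) : ℕ := sSup { j | t ≤ j ∧ ω j = ω t }

/-- The times of the chronological loop erasure (last-exit decomposition). -/
noncomputable def leTime (ω : ℕ → V d) : ℕ → ℕ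
  | 0 => lastVisit ω 0
  | k + 1 => lastVisit ω (leTime ω k + 1)

/-- Chronological loop erasure of an (infinite, transient) path. -/
noncomputable def infLoopErase (ω : ℕ → V d) : ℕ → V d := fun k => ω (leTime ω k)

/-- The loop erasure `L` of the walk stopped at its first exit from `D`. -/
noncomputable def lerw (D : Set (V d)) (ω : ℕ → V d) : ℕ → V d := infLoopErase (stopAt D ω)

/-- The event `T_A > τ_D`: the walk does not visit `A` at any time up to (and
including) its first exit from `D`; if it never exits `D`, it never visits `A`. -/
def avoidBeforeExit (D A : Set (V d)) (ω : ℕ → V d) : Prop :=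
  ∀ j : ℕ, (j : ENat) ≤ exitTimeE D ω → ω j ∉ A

/-- The event `T⁺_A > τ_D` (visits of `A` at positive times only). -/
def avoidBeforeExitPos (D A : Set (V d)) (ω : ℕ → V d) : Prop :=
  ∀ j : ℕ, 1 ≤ j → (j : ENat) ≤ exitTimeE D ω → ω j ∉ A

/-- The right-hand face (in the first coordinate direction) of the cube `Q(x₀,m)`. -/
def rightFace (x₀ : V d) (m : ℕ) : Set (V d) :=
  { y | y ∈ cube x₀ m ∧ ∀ i : Fin d, (i : ℕ) = 0 → y i = x₀ i + (m : ℤ) }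


/-- The set of sites visited by the path during the time interval `[a,b]`. -/
def rangeSet (a b : ℕ) (ω : ℕ → V d) : Set (V d) := { v | ∃ j, a ≤ j ∧ j ≤ b ∧ ω j = v }

/-- Euclidean distance from a point to a set of lattice points. -/
noncomputable def eudistSet (x : V d) (A : Set (V d)) : ℝ := sInf (eudist x '' A)


/-- unit steps -/
def stp (e : Fin d × Bool) : V d := Pi.single e.1 (if e.2 then 1 else -1)

/-- torus measure -/
noncomputable def rho (d : ℕ) : Measure (Fin d → ℝ) :=
  Measure.pi (fun _ => (volume : Measure ℝ).restrict (Set.Ioc (-Real.pi) Real.pi))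

instance rho_finite : IsFiniteMeasure (rho d) := by
  unfold rho; infer_instance

/-- characteristic function -/
noncomputable def phi (θ : Fin d → ℝ) : ℝ := (∑ i, Real.cos (θ i)) / d

/-- phase -/
noncomputable def ph (x : V d) (θ : Fin d → ℝ) : ℝ := ∑ i, (x i : ℝ) * θ i

/-- Fourier formula for the heat kernel -/
noncomputable def hk (m : ℕ) (x : V d) : ℝ :=
  (∫ θ, phi θ ^ m * Real.cos (ph x θ) ∂(rho d)) / (2 * Real.pi) ^ d

lemma phi_cont : Continuous (phi : (Fin d → ℝ) → ℝ) := by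
  unfold phi; fun_prop

lemma ph_cont (x : V d) : Continuous (ph x) := by
  unfold ph; fun_prop

lemma phi_abs_le (θ : Fin d → ℝ) : |phi θ| ≤ 1 := by
  unfold phi
  rw [abs_div, Nat.abs_cast]
  apply div_le_one_of_le₀ _ (by positivity)
  calc |∑ i, Real.cos (θ i)| ≤ ∑ i, |Real.cos (θ i)| := Finset.abs_sum_le_sum_abs _ _
    _ ≤ ∑ i : Fin d, (1:ℝ) := Finset.sum_le_sum (fun i _ => Real.abs_cos_le_one _)
    _ = d := by simp

lemma hk_integrable (m : ℕ) (x : V d) :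
    Integrable (fun θ => phi θ ^ m * Real.cos (ph x θ)) (rho d) := by
  apply Integrable.of_bound (C := 1)
  · apply Continuous.aestronglyMeasurable
    have := phi_cont (d := d); have := ph_cont x; fun_prop
  · refine Filter.Eventually.of_forall (fun θ => ?_)
    rw [Real.norm_eq_abs, abs_mul, abs_pow]
    exact mul_le_one₀ (pow_le_one₀ (abs_nonneg _) (phi_abs_le θ)) (abs_nonneg _) (Real.abs_cos_le_one _)

lemma ph_add (x y : V d) (θ : Fin d → ℝ) : ph (x + y) θ = ph x θ + ph y θ := by
  simp [ph, add_mul, Finset.sum_add_distrib]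

lemma ph_stp (e : Fin d × Bool) (θ : Fin d → ℝ) :
    ph (stp e) θ = (if e.2 then 1 else -1) * θ e.1 := by
  unfold ph stp
  rw [Finset.sum_eq_single e.1]
  · simp
  · intro b _ hb; simp [Pi.single_eq_of_ne hb]
  · simp

lemma phi_mul_cos (hd : 0 < d) (x : V d) (θ : Fin d → ℝ) :
    phi θ * Real.cos (ph x θ) = (∑ e : Fin d × Bool, Real.cos (ph (x - stp e) θ)) / (2 * d) := by
  have h : ∀ e : Fin d × Bool, ph (x - stp e) θ = ph x θ - (if e.2 then 1 else -1) * θ e.1 := by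
    intro e
    have := ph_add (x - stp e) (stp e) θ
    rw [sub_add_cancel, ph_stp] at this; linarith
  simp_rw [h]
  rw [Fintype.sum_prod_type]
  simp only [Fintype.sum_bool, if_true, Bool.false_eq_true, if_false]
  have : ∀ i : Fin d, Real.cos (ph x θ - 1 * θ i) + Real.cos (ph x θ - -1 * θ i) =
      2 * Real.cos (ph x θ) * Real.cos (θ i) := by
    intro i; rw [one_mul, neg_one_mul, sub_neg_eq_add, Real.cos_sub, Real.cos_add]; ring
  simp_rw [this, ← Finset.mul_sum]
  unfold phi
  have : (d:ℝ) ≠ 0 := by positivity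
  field_simp

lemma hk_succ (hd : 0 < d) (m : ℕ) (x : V d) :
    hk (m + 1) x = (∑ e : Fin d × Bool, hk m (x - stp e)) / (2 * d) := by
  unfold hk
  rw [← Finset.sum_div, div_right_comm]
  congr 1
  rw [← integral_finsetSum _ (fun e _ => hk_integrable m _), ← integral_div]
  congr 1; ext θ
  rw [pow_succ, mul_assoc, phi_mul_cos hd, ← Finset.mul_sum, mul_div_assoc]

lemma int1 (n : ℤ) : ∫ t in Set.Ioc (-Real.pi) Real.pi, Complex.exp (((n : ℝ) * t : ℝ) * Complex.I)
    = if n = 0 then ((2 * Real.pi : ℝ) : ℂ) else 0 := by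
  rw [← intervalIntegral.integral_of_le (by linarith [Real.pi_pos])]
  split_ifs with h
  · subst h; simp; ring
  · have hc : ((n:ℂ) * Complex.I) ≠ 0 := by simp [h]
    have := integral_exp_mul_complex (a := -Real.pi) (b := Real.pi) hc
    have e : ∀ t : ℝ, Complex.exp (((n : ℝ) * t : ℝ) * Complex.I) = Complex.exp ((n:ℂ) * Complex.I * t) := by
      intro t; congr 1; push_cast; ring
    simp_rw [e]
    rw [this, div_eq_zero_iff]; left
    rw [sub_eq_zero, Complex.exp_eq_exp_iff_exists_int]
    exact ⟨n, by push_cast; ring⟩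

lemma hk_zero (x : V d) : hk 0 x = if x = 0 then 1 else 0 := by
  have h1 : ∫ θ, Complex.exp ((ph x θ : ℝ) * Complex.I) ∂(rho d) =
      ∏ i, (if x i = 0 then ((2 * Real.pi : ℝ) : ℂ) else 0) := by
    simp_rw [← int1]
    unfold rho
    rw [← integral_fintype_prod_eq_prod]
    congr 1; ext θ
    rw [← Complex.exp_sum]
    congr 1
    unfold ph; push_cast; rw [Finset.sum_mul]
  have hint : Integrable (fun θ => Complex.exp ((ph x θ : ℝ) * Complex.I)) (rho d) := by
    apply Integrable.of_bound (C := 1)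
    · apply Continuous.aestronglyMeasurable
      have := ph_cont x; fun_prop
    · refine Filter.Eventually.of_forall (fun θ => ?_)
      rw [Complex.norm_exp_ofReal_mul_I]
  have h2 : ∫ θ, Real.cos (ph x θ) ∂(rho d) = (∫ θ, Complex.exp ((ph x θ : ℝ) * Complex.I) ∂(rho d)).re := by
    have := integral_re hint
    simp only [RCLike.re_to_complex, Complex.exp_ofReal_mul_I_re] at this
    exact this
  unfold hk
  simp only [pow_zero, one_mul]
  rw [h2, h1]
  split_ifs with h
  · subst h
    simp only [Pi.zero_apply, if_true, Finset.prod_const, Finset.card_univ, Fintype.card_fin]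
    rw [← Complex.ofReal_pow, Complex.ofReal_re, div_self (by positivity)]
  · obtain ⟨i, hi⟩ : ∃ i, x i ≠ 0 := by
      by_contra hh; push Not at hh; exact h (funext hh)
    rw [Finset.prod_eq_zero (Finset.mem_univ i) (by simp [hi])]; simp

lemma phi_pow_le (hd : 0 < d) (m : ℕ) (θ : Fin d → ℝ) :
    |phi θ| ^ m ≤ ∏ i, Real.exp (-(m / (2 * d) : ℝ) * Real.sin (θ i) ^ 2) := by
  have hd' : (0:ℝ) < d := by positivity
  have h1 : |phi θ| ≤ Real.exp (-(1 / (2 * d) : ℝ) * ∑ i, Real.sin (θ i) ^ 2) := by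
    refine le_trans ?_ (Real.add_one_le_exp _)
    unfold phi
    rw [abs_div, Nat.abs_cast, div_le_iff₀ hd']
    calc |∑ i, Real.cos (θ i)| ≤ ∑ i, |Real.cos (θ i)| := Finset.abs_sum_le_sum_abs _ _
      _ ≤ ∑ i : Fin d, (1 - Real.sin (θ i) ^ 2 / 2) := by
        refine Finset.sum_le_sum (fun i _ => ?_)
        have := Real.sin_sq_add_cos_sq (θ i)
        have h := sq_abs (Real.cos (θ i))
        nlinarith [sq_nonneg (|Real.cos (θ i)| - 1)]
      _ = _ := by
        rw [Finset.sum_sub_distrib, ← Finset.sum_div]; simp; field_simp; ring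
  calc |phi θ| ^ m ≤ _ := pow_le_pow_left₀ (abs_nonneg _) h1 m
    _ = _ := by
      rw [← Real.exp_nat_mul, ← Real.exp_sum, ← Finset.mul_sum]; congr 1; ring

lemma sin_sq_lb (t : ℝ) (h : |t| ≤ Real.pi / 2) : 4 / Real.pi ^ 2 * t ^ 2 ≤ Real.sin t ^ 2 := by
  have := Real.mul_abs_le_abs_sin h
  have h2 : (2 / Real.pi * |t|) ^ 2 ≤ |Real.sin t| ^ 2 := by
    apply pow_le_pow_left₀ _ this
    have := Real.pi_pos; positivity
  rw [sq_abs, mul_pow, sq_abs] at h2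
  convert h2 using 2; ring

lemma int_sin (c : ℝ) (hc : 0 < c) :
    ∫ t in Set.Ioc (-Real.pi) Real.pi, Real.exp (-c * Real.sin t ^ 2) ≤
      3 * √(Real.pi / (c * (4 / Real.pi ^ 2))) := by
  have hpi := Real.pi_pos
  set b := c * (4 / Real.pi ^ 2) with hb
  have hb0 : 0 < b := by positivity
  let g : ℝ → ℝ := fun t => Real.exp (-b * t ^ 2)
  have gi : Integrable g := integrable_exp_neg_mul_sq hb0
  have gp : Integrable (fun t => g (t + Real.pi)) := gi.comp_add_right _
  have gm : Integrable (fun t => g (t - Real.pi)) := gi.comp_sub_right _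
  have hpt : ∀ t ∈ Set.Ioc (-Real.pi) Real.pi, Real.exp (-c * Real.sin t ^ 2) ≤
      g t + g (t + Real.pi) + g (t - Real.pi) := by
    intro t ht
    have key : ∀ s : ℝ, |s| ≤ Real.pi / 2 → Real.sin s ^ 2 = Real.sin t ^ 2 →
        Real.exp (-c * Real.sin t ^ 2) ≤ g s := by
      intro s hs he
      apply Real.exp_le_exp.2
      have := mul_le_mul_of_nonneg_left (sin_sq_lb s hs) hc.le
      rw [← he, hb]; linarith
    have p1 : 0 ≤ g t := (Real.exp_pos _).le
    have p2 : 0 ≤ g (t + Real.pi) := (Real.exp_pos _).le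
    have p3 : 0 ≤ g (t - Real.pi) := (Real.exp_pos _).le
    rcases ht with ⟨ht1, ht2⟩
    by_cases h1 : |t| ≤ Real.pi / 2
    · have := key t h1 rfl; linarith
    · by_cases h0 : 0 ≤ t
      · rw [abs_of_nonneg h0] at h1
        have := key (t - Real.pi) (by rw [abs_le]; constructor <;> linarith) (by rw [Real.sin_sub_pi]; ring)
        linarith
      · rw [abs_of_neg (by linarith)] at h1
        have := key (t + Real.pi) (by rw [abs_le]; constructor <;> linarith) (by rw [Real.sin_add_pi]; ring)
        linarith
  have hsum : Integrable (fun t => g t + g (t + Real.pi) + g (t - Real.pi)) := (gi.add gp).add gm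
  calc _ ≤ ∫ t in Set.Ioc (-Real.pi) Real.pi, (g t + g (t + Real.pi) + g (t - Real.pi)) := by
        apply setIntegral_mono_on _ hsum.integrableOn measurableSet_Ioc hpt
        apply (Continuous.integrableOn_Ioc (by fun_prop))
    _ ≤ ∫ t, (g t + g (t + Real.pi) + g (t - Real.pi)) := by
        apply setIntegral_le_integral hsum
        refine Filter.Eventually.of_forall (fun t => ?_)
        exact add_nonneg (add_nonneg (Real.exp_pos _).le (Real.exp_pos _).le) (Real.exp_pos _).le
    _ = 3 * √(Real.pi / b) := by
        have gip : Integrable (fun t => g t + g (t + Real.pi)) := gi.add gp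
        rw [integral_add gip gm, integral_add gi gp, integral_add_right_eq_self g,
          integral_sub_right_eq_self g, integral_gaussian]; ring

lemma hk_le (hd : 0 < d) (m : ℕ) (hm : 0 < m) (x : V d) :
    hk m x ≤ (3 * √(Real.pi / ((m / (2 * d) : ℝ) * (4 / Real.pi ^ 2)))) ^ d := by
  have hd' : (0:ℝ) < d := by positivity
  have hm' : (0:ℝ) < m := by positivity
  have hpi := Real.pi_pos
  have hpi3 := Real.pi_gt_three
  have hint : Integrable (fun θ : Fin d → ℝ => ∏ i, Real.exp (-(m / (2 * d) : ℝ) * Real.sin (θ i) ^ 2)) (rho d) := by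
    apply Integrable.of_bound (C := 1)
    · apply Continuous.aestronglyMeasurable; fun_prop
    · refine Filter.Eventually.of_forall (fun θ => ?_)
      rw [Real.norm_eq_abs, abs_of_nonneg (by positivity)]
      apply Finset.prod_le_one
      · intros; positivity
      · intro i _
        rw [Real.exp_le_one_iff]
        have : 0 ≤ (m / (2 * d) : ℝ) * Real.sin (θ i) ^ 2 := by positivity
        linarith
  have h1 : ∫ θ, phi θ ^ m * Real.cos (ph x θ) ∂(rho d) ≤
      ∫ θ, ∏ i, Real.exp (-(m / (2 * d) : ℝ) * Real.sin (θ i) ^ 2) ∂(rho d) := by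
    apply integral_mono (hk_integrable m x) hint
    intro θ
    refine le_trans (le_abs_self _) ?_
    simp only []
    rw [abs_mul, abs_pow]
    refine le_trans ?_ (phi_pow_le hd m θ)
    exact mul_le_of_le_one_right (by positivity) (Real.abs_cos_le_one _)
  have h2 : ∫ θ : Fin d → ℝ, ∏ i, Real.exp (-(m / (2 * d) : ℝ) * Real.sin (θ i) ^ 2) ∂(rho d) ≤
      (3 * √(Real.pi / ((m / (2 * d) : ℝ) * (4 / Real.pi ^ 2)))) ^ d := by
    unfold rho
    rw [integral_fintype_prod_eq_prod (f := fun _ t => Real.exp (-(m / (2 * d) : ℝ) * Real.sin t ^ 2))]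
    rw [Finset.prod_const, Finset.card_univ, Fintype.card_fin]
    apply pow_le_pow_left₀
    · apply integral_nonneg; intro t; exact (Real.exp_pos _).le
    · exact int_sin _ (by positivity)
  unfold hk
  rw [div_le_iff₀ (by positivity)]
  refine (h1.trans h2).trans (le_mul_of_one_le_right (by positivity) ?_)
  apply one_le_pow₀; linarith

lemma hk_bound (hd : 5 ≤ d) : ∃ K : ℝ, 0 < K ∧ ∀ m : ℕ, 0 < m → ∀ x : V d, hk m x ≤ K / (√m) ^ 5 := by
  have hpi := Real.pi_pos
  have hd' : (0:ℝ) < d := by positivity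
  set K0 := 3 * √(Real.pi / ((1 / (2 * d) : ℝ) * (4 / Real.pi ^ 2))) with hK
  have hK0 : 0 < K0 := by positivity
  refine ⟨K0 ^ d, by positivity, fun m hm x => ?_⟩
  have hm' : (1:ℝ) ≤ m := by exact_mod_cast hm
  have hs : 1 ≤ √(m:ℝ) := by rw [Real.one_le_sqrt]; exact hm'
  refine le_trans (hk_le (by omega) m hm x) ?_
  have : 3 * √(Real.pi / ((m / (2 * d) : ℝ) * (4 / Real.pi ^ 2))) = K0 / √m := by
    rw [hK, mul_div_assoc, ← Real.sqrt_div (by positivity)]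
    congr 2; field_simp
  rw [this, div_pow]
  apply div_le_div_of_nonneg_left (by positivity) (by positivity)
  exact pow_le_pow_right₀ hs hd

lemma stp_inj : Function.Injective (stp : Fin d × Bool → V d) := by
  rintro ⟨i, b⟩ ⟨i', b'⟩ h
  unfold stp at h
  have h1 := congrFun h i
  simp only [Pi.single_eq_same] at h1
  by_cases hi : i = i'
  · subst hi
    simp only [Pi.single_eq_same] at h1
    cases b <;> cases b' <;> simp_all
  · rw [Pi.single_eq_of_ne hi] at h1
    cases b <;> simp at h1

lemma adj_stp (x : V d) (e : Fin d × Bool) : adj x (x + stp e) := by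
  unfold adj stp
  rw [Finset.sum_eq_single e.1]
  · cases h : e.2 <;> simp
  · intro b _ hb; simp [Pi.single_eq_of_ne hb]
  · simp

/-- cylinder -/
def cyl (j : ℕ) (γ : ℕ → V d) : Set (ℕ → V d) := {ω | ∀ i ≤ j, ω i = γ i}

/-- event determined by coordinates up to j -/
def Dep (j : ℕ) (B : Set (ℕ → V d)) : Prop :=
  ∀ ω ω' : ℕ → V d, (∀ i ≤ j, ω i = ω' i) → ω ∈ B → ω' ∈ B

/-- extension of a finite path -/
def exn (j : ℕ) (g : Fin (j + 1) → V d) : ℕ → V d := fun i => g ⟨min i j, by omega⟩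

/-- restriction of a path -/
def rst (j : ℕ) (ω : ℕ → V d) : Fin (j + 1) → V d := fun i => ω i

lemma exn_rst (j : ℕ) (ω : ℕ → V d) (i : ℕ) (hi : i ≤ j) : exn j (rst j ω) i = ω i := by
  simp [exn, rst, min_eq_left hi]

lemma cyl_exn (j : ℕ) (g : Fin (j + 1) → V d) : cyl j (exn j g) = rst j ⁻¹' {g} := by
  ext ω
  simp only [cyl, Set.mem_ofPred_eq, Set.mem_preimage, Set.mem_singleton_iff]
  constructor
  · intro h; ext1 i
    have hi : (i : ℕ) ≤ j := by omega
    have := h i hi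
    simpa [exn, rst, min_eq_left hi] using this
  · rintro rfl i hi; exact (exn_rst j ω i hi).symm

lemma rst_meas (j : ℕ) : Measurable (rst j : (ℕ → V d) → _) := by
  unfold rst; exact measurable_pi_lambda _ (fun i => measurable_pi_apply _)

lemma Dep.eq_preimage {j : ℕ} {B : Set (ℕ → V d)} (h : Dep j B) : B = rst j ⁻¹' {g | exn j g ∈ B} := by
  ext ω
  simp only [Set.mem_preimage, Set.mem_ofPred_eq]
  exact ⟨h _ _ (fun i hi => (exn_rst j ω i hi).symm), h _ _ (fun i hi => (exn_rst j ω i hi))⟩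

lemma Dep.meas {j : ℕ} {B : Set (ℕ → V d)} (h : Dep j B) : MeasurableSet B := by
  rw [h.eq_preimage]
  exact rst_meas j (Set.to_countable _).measurableSet

lemma cyl_dep (j : ℕ) (γ : ℕ → V d) : Dep j (cyl j γ) := by
  intro ω ω' h hω i hi
  rw [← h i hi]; exact hω i hi

lemma cyl_meas (j : ℕ) (γ : ℕ → V d) : MeasurableSet (cyl j γ) := (cyl_dep j γ).meas

/-- extended cylinder -/
def cylE (j : ℕ) (γ : ℕ → V d) (e : Fin d × Bool) : Set (ℕ → V d) :=
  cyl (j + 1) (Function.update γ (j + 1) (γ j + stp e))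

lemma cylE_meas (j : ℕ) (γ : ℕ → V d) (e : Fin d × Bool) : MeasurableSet (cylE j γ e) := cyl_meas _ _

lemma mem_cylE {j : ℕ} {γ : ℕ → V d} {e : Fin d × Bool} {ω : ℕ → V d} :
    ω ∈ cylE j γ e ↔ ω ∈ cyl j γ ∧ ω (j + 1) = γ j + stp e := by
  unfold cylE cyl
  simp only [Set.mem_ofPred_eq]
  constructor
  · intro h
    refine ⟨fun i hi => ?_, ?_⟩
    · rw [h i (by omega), Function.update_of_ne (by omega)]
    · rw [h (j+1) le_rfl, Function.update_self]
  · rintro ⟨h1, h2⟩ i hi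
    by_cases hij : i = j + 1
    · subst hij; rw [h2, Function.update_self]
    · rw [h1 i (by omega), Function.update_of_ne hij]

lemma cylE_disj (j : ℕ) (γ : ℕ → V d) : Pairwise (Function.onFun Disjoint (cylE j γ)) := by
  intro e e' hne
  rw [Function.onFun, Set.disjoint_left]
  intro ω h h'
  rw [mem_cylE] at h h'
  exact hne (stp_inj (add_left_cancel (h.2.symm.trans h'.2)))

section law
variable {μ : Measure (ℕ → V d)} {x : V d}

lemma cyl_mass (h : IsSRWLaw μ x) (j : ℕ) (γ : ℕ → V d) (h0 : γ 0 = x)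
    (hγ : ∀ i < j, ∃ e, γ (i + 1) = γ i + stp e) : μ (cyl j γ) = (2 * (d : ℝ≥0∞))⁻¹ ^ j := by
  apply h.2 j γ h0
  intro i hi
  obtain ⟨e, he⟩ := hγ i hi
  rw [he]; exact adj_stp _ _

lemma cylE_mass (h : IsSRWLaw μ x) (j : ℕ) (γ : ℕ → V d) (h0 : γ 0 = x)
    (hγ : ∀ i < j, ∃ e, γ (i + 1) = γ i + stp e) (e : Fin d × Bool) :
    μ (cylE j γ e) = (2 * (d : ℝ≥0∞))⁻¹ ^ (j + 1) := by
  apply cyl_mass h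
  · rw [Function.update_of_ne (by omega), h0]
  · intro i hi
    by_cases hij : i = j
    · subst hij
      exact ⟨e, by rw [Function.update_self, Function.update_of_ne (by omega)]⟩
    · rw [Function.update_of_ne (by omega), Function.update_of_ne (by omega)]
      exact hγ i (by omega)

lemma card_mul (hd : 0 < d) (j : ℕ) :
    ∑ _e : Fin d × Bool, (2 * (d : ℝ≥0∞))⁻¹ ^ (j + 1) = (2 * (d : ℝ≥0∞))⁻¹ ^ j := by
  have h0 : (2 * (d : ℝ≥0∞)) ≠ 0 := by simp; omega
  have ht : (2 * (d : ℝ≥0∞)) ≠ ∞ := by finiteness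
  rw [Finset.sum_const, Finset.card_univ, Fintype.card_prod, Fintype.card_fin, Fintype.card_bool,
    nsmul_eq_mul, pow_succ, mul_comm, mul_assoc]
  push_cast
  rw [mul_comm (d : ℝ≥0∞) 2, ENNReal.inv_mul_cancel h0 ht, mul_one]

lemma cyl_ae (hd : 0 < d) (h : IsSRWLaw μ x) (j : ℕ) (γ : ℕ → V d) (h0 : γ 0 = x)
    (hγ : ∀ i < j, ∃ e, γ (i + 1) = γ i + stp e) :
    μ (cyl j γ \ ⋃ e, cylE j γ e) = 0 := by
  have := h.1
  have hsub : (⋃ e, cylE j γ e) ⊆ cyl j γ := by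
    intro ω hω; rw [Set.mem_iUnion] at hω; obtain ⟨e, he⟩ := hω; exact (mem_cylE.1 he).1
  have hm : MeasurableSet (⋃ e, cylE j γ e) := MeasurableSet.iUnion (fun e => cyl_meas _ _)
  rw [measure_sdiff hsub hm.nullMeasurableSet (measure_ne_top _ _),
    measure_iUnion (cylE_disj j γ) (fun e => cyl_meas _ _), tsum_fintype]
  simp_rw [cylE_mass h j γ h0 hγ]
  rw [card_mul hd, cyl_mass h j γ h0 hγ, tsub_self]

lemma ae_nn (hd : 0 < d) (h : IsSRWLaw μ x) (j : ℕ) :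
    ∀ᵐ ω ∂μ, ω 0 = x ∧ ∀ i < j, ∃ e, ω (i + 1) = ω i + stp e := by
  have := h.1
  induction j with
  | zero =>
    have h1 : μ (cyl 0 (fun _ => x)) = 1 := by
      rw [cyl_mass h 0 _ rfl (by simp)]; simp
    have h2 : ∀ᵐ ω ∂μ, ω ∈ cyl 0 (fun _ => x) := by
      rw [← mem_ae_iff_prob_eq_one (cyl_meas _ _)] at h1
      exact h1
    filter_upwards [h2] with ω hω
    exact ⟨hω 0 le_rfl, by simp⟩
  | succ j ih =>
    have h2 : ∀ᵐ ω ∂μ, ∀ g : Fin (j + 1) → V d, (exn j g 0 = x ∧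
        ∀ i < j, ∃ e, exn j g (i + 1) = exn j g i + stp e) →
        ω ∉ (cyl j (exn j g) \ ⋃ e, cylE j (exn j g) e) := by
      rw [ae_all_iff]
      intro g
      by_cases hg : (exn j g 0 = x ∧ ∀ i < j, ∃ e, exn j g (i + 1) = exn j g i + stp e)
      · have := cyl_ae hd h j _ hg.1 hg.2
        rw [measure_eq_zero_iff_ae_notMem] at this
        filter_upwards [this] with ω hω _ using hω
      · exact Filter.Eventually.of_forall (fun ω hh => absurd hh hg)
    filter_upwards [ih, h2] with ω hω h3
    refine ⟨hω.1, fun i hi => ?_⟩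
    by_cases hij : i = j
    · subst hij
      have h4 := h3 (rst i ω) ⟨by rw [exn_rst _ _ _ (by omega)]; exact hω.1, fun l hl => by
        rw [exn_rst _ _ _ (by omega), exn_rst _ _ _ (by omega)]; exact hω.2 l hl⟩
      simp only [Set.mem_sdiff, not_and, not_not] at h4
      have h5 := h4 (by rw [cyl_exn]; simp)
      rw [Set.mem_iUnion] at h5
      obtain ⟨e, he⟩ := h5
      have := (mem_cylE.1 he).2
      rw [exn_rst _ _ _ le_rfl] at this
      exact ⟨e, this⟩
    · exact hω.2 i (by omega)

lemma ae_nn' (hd : 0 < d) (h : IsSRWLaw μ x) :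
    ∀ᵐ ω ∂μ, ω 0 = x ∧ ∀ i, ∃ e, ω (i + 1) = ω i + stp e := by
  have := ae_all_iff.2 (fun j => ae_nn hd h j)
  filter_upwards [this] with ω hω
  exact ⟨(hω 0).1, fun i => (hω (i+1)).2 i (by omega)⟩

lemma markov_cyl (hd : 0 < d) (h : IsSRWLaw μ x) (j : ℕ) (γ : ℕ → V d) (f : V d → ℝ≥0∞) :
    ∫⁻ ω in cyl j γ, f (ω (j + 1)) ∂μ =
      ∫⁻ ω in cyl j γ, (2 * (d : ℝ≥0∞))⁻¹ * ∑ e, f (ω j + stp e) ∂μ := by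
  have := h.1
  by_cases hz : μ (cyl j γ) = 0
  · rw [Measure.restrict_eq_zero.2 hz]; simp
  have hγ : γ 0 = x ∧ ∀ i < j, ∃ e, γ (i + 1) = γ i + stp e := by
    by_contra hc
    apply hz
    rw [measure_eq_zero_iff_ae_notMem]
    filter_upwards [ae_nn hd h j] with ω hω hmem
    apply hc
    refine ⟨by rw [← hmem 0 (by omega)]; exact hω.1, fun i hi => ?_⟩
    rw [← hmem i (by omega), ← hmem (i+1) (by omega)]; exact hω.2 i hi
  have hsub : (⋃ e, cylE j γ e) ⊆ cyl j γ := by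
    intro ω hω; rw [Set.mem_iUnion] at hω; obtain ⟨e, he⟩ := hω; exact (mem_cylE.1 he).1
  have hae : (cyl j γ : Set (ℕ → V d)) =ᵐ[μ] (⋃ e, cylE j γ e : Set (ℕ → V d)) := by
    rw [ae_eq_set]
    exact ⟨cyl_ae hd h j γ hγ.1 hγ.2, by rw [Set.sdiff_eq_empty.2 hsub]; simp⟩
  rw [setLIntegral_congr hae, lintegral_iUnion (cylE_meas j γ) (cylE_disj j γ), tsum_fintype]
  have e1 : ∀ e, ∫⁻ ω in cylE j γ e, f (ω (j + 1)) ∂μ = f (γ j + stp e) * (2 * (d : ℝ≥0∞))⁻¹ ^ (j + 1) := by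
    intro e
    rw [setLIntegral_congr_fun (g := fun _ => f (γ j + stp e)) (cylE_meas j γ e)
      (fun ω hω => by simp only []; rw [(mem_cylE.1 hω).2]), setLIntegral_const, cylE_mass h j γ hγ.1 hγ.2]
  rw [setLIntegral_congr_fun (g := fun _ => (2 * (d : ℝ≥0∞))⁻¹ * ∑ e, f (γ j + stp e)) (cyl_meas j γ)
      (fun ω hω => by simp only []; rw [hω j le_rfl]), setLIntegral_const, cyl_mass h j γ hγ.1 hγ.2]
  simp_rw [e1]
  rw [← Finset.sum_mul, pow_succ]; ring

lemma markov (hd : 0 < d) (h : IsSRWLaw μ x) (j : ℕ) (B : Set (ℕ → V d)) (hB : Dep j B) (f : V d → ℝ≥0∞) :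
    ∫⁻ ω in B, f (ω (j + 1)) ∂μ =
      ∫⁻ ω in B, (2 * (d : ℝ≥0∞))⁻¹ * ∑ e, f (ω j + stp e) ∂μ := by
  have hU : B = ⋃ g : {g : Fin (j + 1) → V d // exn j g ∈ B}, cyl j (exn j g.1) := by
    ext ω
    conv_lhs => rw [hB.eq_preimage]
    simp [cyl_exn]
  have hdis : Pairwise (Function.onFun Disjoint
      (fun g : {g : Fin (j + 1) → V d // exn j g ∈ B} => cyl j (exn j g.1))) := by
    intro g g' hne
    rw [Function.onFun, Set.disjoint_left]
    intro ω h h'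
    rw [cyl_exn] at h h'
    exact hne (Subtype.ext (h.symm.trans h'))
  rw [hU, lintegral_iUnion (fun e => cyl_meas _ _) hdis, lintegral_iUnion (fun e => cyl_meas _ _) hdis]
  congr 1; ext g
  exact markov_cyl hd h j _ f

lemma point_eq (hd : 0 < d) (h : IsSRWLaw μ x) (k : ℕ) (A : Set (ℕ → V d)) (hA : Dep k A) (a : V d)
    (ha : ∀ ω ∈ A, ω k = a) (m : ℕ) : ∀ y : V d,
    (μ (A ∩ {ω | ω (k + m) = y})).toReal = (μ A).toReal * hk m (y - a) := by
  have := h.1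
  induction m with
  | zero =>
    intro y
    rw [hk_zero]
    split_ifs with hy
    · rw [sub_eq_zero] at hy; subst hy
      have hs : A ⊆ {ω : ℕ → V d | ω (k + 0) = y} := fun ω hω => ha ω hω
      rw [mul_one, Set.inter_eq_left.2 hs]
    · rw [Set.eq_empty_of_forall_notMem (s := A ∩ _)]
      · simp
      · rintro ω ⟨h1, h2⟩
        apply hy; rw [sub_eq_zero, ← ha ω h1, ← h2]; rfl
  | succ m ih =>
    intro y
    have hms : ∀ (i : ℕ) (z : V d), MeasurableSet {ω : ℕ → V d | ω i = z} :=
      fun i z => measurableSet_eq_fun (measurable_pi_apply i) measurable_const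
    have hA' : Dep (k + m) A := fun ω ω' hh hω => hA ω ω' (fun i hi => hh i (by omega)) hω
    have e0 : ∀ (i : ℕ) (z : V d), ∫⁻ ω in A, (if ω i = z then (1:ℝ≥0∞) else 0) ∂μ = μ (A ∩ {ω | ω i = z}) := by
      intro i z
      rw [Set.inter_comm, ← Measure.restrict_apply (hms i z), ← lintegral_indicator_one (hms i z)]
      congr 1
      ext ω
      simp [Set.indicator_apply]
    have e1 := markov hd h (k + m) A hA' (fun v => if v = y then 1 else 0)
    have e2 : ∀ (v : V d) e, (v + stp e = y) ↔ v = y - stp e := fun v e => eq_sub_iff_add_eq.symm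
    simp only [e2] at e1
    rw [e0, lintegral_const_mul, lintegral_finsetSum] at e1
    · simp_rw [e0] at e1
      rw [← add_assoc, e1, ENNReal.toReal_mul, ENNReal.toReal_sum (fun e _ => measure_ne_top _ _)]
      simp_rw [ih]
      rw [hk_succ hd, ← Finset.mul_sum, ENNReal.toReal_inv]
      simp only [ENNReal.toReal_mul, ENNReal.toReal_natCast, ENNReal.toReal_ofNat]
      have : ∀ e, y - stp e - a = y - a - stp e := fun e => by abel
      simp_rw [this]
      ring
    · intro e _
      exact Measurable.ite (hms _ _) measurable_const measurable_const
    · exact Finset.measurable_sum _ (fun e _ => Measurable.ite (hms _ _) measurable_const measurable_const)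

end law

section part3
variable {μ μ' : Measure (ℕ → V d)} {x : V d}

lemma point_le (hd : 0 < d) (h : IsSRWLaw μ x) (k : ℕ) (A : Set (ℕ → V d)) (hA : Dep k A) (a : V d)
    (ha : ∀ ω ∈ A, ω k = a) (K : ℝ) (hK : ∀ m : ℕ, 0 < m → ∀ x : V d, hk m x ≤ K / (√m) ^ 5)
    (i : ℕ) (hi : k < i) (y : V d) :
    μ (A ∩ {ω | ω i = y}) ≤ ENNReal.ofReal (K / (√((i - k : ℕ) : ℝ)) ^ 5) * μ A := by
  have := h.1
  have h1 := point_eq hd h k A hA a ha (i - k) y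
  rw [show k + (i - k) = i by omega] at h1
  rw [← ENNReal.ofReal_toReal (measure_ne_top μ (A ∩ {ω | ω i = y})), h1,
    mul_comm, ENNReal.ofReal_mul' ENNReal.toReal_nonneg, ENNReal.ofReal_toReal (measure_ne_top _ _)]
  gcongr
  exact hK _ (by omega) _

lemma cube_finite (n : ℕ) : (cube (0 : V d) n).Finite := by
  apply (Set.finite_Icc (fun _ => -(n:ℤ) : V d) (fun _ => (n:ℤ))).subset
  intro y hy
  rw [Set.mem_Icc, Pi.le_def, Pi.le_def]
  have h : ∀ i, |y i| ≤ n := fun i => by simpa using hy i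
  exact ⟨fun i => (abs_le.1 (h i)).1, fun i => (abs_le.1 (h i)).2⟩

lemma exit_ae (hd : 5 ≤ d) (h : IsSRWLaw μ x) (n : ℕ) : ∀ᵐ ω ∂μ, ∃ t, ω t ∉ cube 0 n := by
  have := h.1
  obtain ⟨K, hK0, hK⟩ := hk_bound hd
  set A : Set (ℕ → V d) := cyl 0 (fun _ => x) with hA
  set Q := (cube_finite (d := d) n).toFinset with hQ
  set E : Set (ℕ → V d) := A ∩ {ω | ∀ t, ω t ∈ cube 0 n} with hE
  have hb : ∀ m : ℕ, 0 < m → (μ E).toReal ≤ Q.card * (K / (√m) ^ 5) := by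
    intro m hm
    have h1 : E ⊆ ⋃ y ∈ Q, A ∩ {ω | ω m = y} := by
      rintro ω ⟨h1, h2⟩
      simp only [Set.mem_iUnion]
      refine ⟨ω m, ?_, h1, rfl⟩
      rw [hQ, Set.Finite.mem_toFinset]; exact h2 m
    have h2 : μ E ≤ ENNReal.ofReal (Q.card * (K / (√m) ^ 5)) := by
      calc μ E ≤ ∑ y ∈ Q, μ (A ∩ {ω | ω m = y}) := (measure_mono h1).trans (measure_biUnion_finset_le _ _)
        _ ≤ ∑ y ∈ Q, ENNReal.ofReal (K / (√m) ^ 5) := by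
          refine Finset.sum_le_sum (fun y _ => ?_)
          refine (point_le (by omega) h 0 A (cyl_dep _ _) x (fun ω hω => hω 0 le_rfl) K hK m hm y).trans ?_
          rw [Nat.sub_zero]
          exact mul_le_of_le_one_right (by simp) prob_le_one
        _ = _ := by
          rw [Finset.sum_const, nsmul_eq_mul, ENNReal.ofReal_mul (by positivity), ENNReal.ofReal_natCast]
    exact ENNReal.toReal_le_of_le_ofReal (by positivity) h2
  have ht : Filter.Tendsto (fun m : ℕ => (Q.card : ℝ) * (K / (√m) ^ 5)) Filter.atTop (nhds 0) := by
    rw [← mul_zero (Q.card : ℝ)]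
    apply Filter.Tendsto.const_mul
    apply Filter.Tendsto.const_div_atTop
    exact (Filter.tendsto_pow_atTop (by norm_num)).comp (Real.tendsto_sqrt_atTop.comp tendsto_natCast_atTop_atTop)
  have hle : (μ E).toReal ≤ 0 := by
    apply ge_of_tendsto ht
    filter_upwards [Filter.eventually_gt_atTop 0] with m hm using hb m hm
  have h0 : μ E = 0 := by
    have := le_antisymm hle ENNReal.toReal_nonneg
    rw [ENNReal.toReal_eq_zero_iff] at this
    exact this.resolve_right (measure_ne_top _ _)
  rw [measure_eq_zero_iff_ae_notMem] at h0
  filter_upwards [h0, ae_nn' (by omega) h] with ω h1 h2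
  by_contra hc
  push Not at hc
  exact h1 ⟨fun i hi => by rw [Nat.le_zero.1 hi]; exact h2.1, hc⟩

/-- shifted height function -/
def psi (n : ℕ) (s : ℤ) (l : Fin d) (v : V d) : ℕ := (2 * (s * v l) + 2 * n + 2).toNat

lemma psi_sum (hd : 0 < d) (n : ℕ) (s : ℤ) (hs : s = 1 ∨ s = -1) (l : Fin d) (v : V d)
    (hv : -(n:ℤ) ≤ s * v l) :
    (2 * (d : ℝ≥0∞))⁻¹ * ∑ e, (psi n s l (v + stp e) : ℝ≥0∞) = psi n s l v := by
  have h1 : ∑ e : Fin d × Bool, psi n s l (v + stp e) = 2 * d * psi n s l v := by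
    rw [Fintype.sum_prod_type]
    have : ∀ i : Fin d, ∑ b : Bool, psi n s l (v + stp (i, b)) = 2 * psi n s l v := by
      intro i
      rw [Fintype.sum_bool]
      unfold psi stp
      simp only [Pi.add_apply, if_true, Bool.false_eq_true, if_false]
      by_cases hl : l = i
      · subst hl
        simp only [Pi.single_eq_same]
        rcases hs with rfl | rfl <;> omega
      · simp only [Pi.single_eq_of_ne hl]
        rcases hs with rfl | rfl <;> omega
    simp_rw [this]
    rw [Finset.sum_const, Finset.card_univ, Fintype.card_fin, smul_eq_mul]; ring
  have h0 : (2 * (d : ℝ≥0∞)) ≠ 0 := by simp; omega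
  have ht : (2 * (d : ℝ≥0∞)) ≠ ∞ := by finiteness
  rw [← Nat.cast_sum, h1]
  push_cast
  rw [← mul_assoc, ENNReal.inv_mul_cancel h0 ht, one_mul]

/-- event that the height reaches n/2 before the cube is left -/
def Hit (n : ℕ) (s : ℤ) (l : Fin d) : Set (ℕ → V d) :=
  {ω | ∃ j, (n : ℤ) ≤ 2 * (s * ω j l) ∧ ∀ i < j, ω i ∈ cube 0 n}

/-- alive event -/
def Alive (n : ℕ) (s : ℤ) (l : Fin d) (A : Set (ℕ → V d)) (N : ℕ) : Set (ℕ → V d) :=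
  {ω | ω ∈ A ∧ ∀ i ≤ N, -(n : ℤ) ≤ s * ω i l ∧ 2 * (s * ω i l) < n}

/-- hit at time N+1 -/
def HitAt (n : ℕ) (s : ℤ) (l : Fin d) (A : Set (ℕ → V d)) (N : ℕ) : Set (ℕ → V d) :=
  {ω | ω ∈ Alive n s l A N ∧ (n : ℤ) ≤ 2 * (s * ω (N + 1) l)}

lemma Alive_dep (n : ℕ) (s : ℤ) (l : Fin d) {A : Set (ℕ → V d)} {k N : ℕ} (hA : Dep k A) (hN : k ≤ N) :
    Dep N (Alive n s l A N) := by
  rintro ω ω' h ⟨h1, h2⟩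
  refine ⟨hA ω ω' (fun i hi => h i (by omega)) h1, fun i hi => ?_⟩
  rw [← h i hi]; exact h2 i hi

lemma HitAt_dep (n : ℕ) (s : ℤ) (l : Fin d) {A : Set (ℕ → V d)} {k N : ℕ} (hA : Dep k A) (hN : k ≤ N) :
    Dep (N + 1) (HitAt n s l A N) := by
  rintro ω ω' h ⟨h1, h2⟩
  refine ⟨Alive_dep n s l hA hN ω ω' (fun i hi => h i (by omega)) h1, ?_⟩
  rw [← h _ le_rfl]; exact h2

lemma gambler_step (hd : 0 < d) (h : IsSRWLaw μ x) (n : ℕ) (s : ℤ) (hs : s = 1 ∨ s = -1) (l : Fin d)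
    {A : Set (ℕ → V d)} {k N : ℕ} (hA : Dep k A) (hN : k ≤ N) :
    ∫⁻ ω in Alive n s l A (N + 1), (psi n s l (ω (N + 1)) : ℝ≥0∞) ∂μ +
      ((3 * n + 2 : ℕ) : ℝ≥0∞) * μ (HitAt n s l A N) ≤
    ∫⁻ ω in Alive n s l A N, (psi n s l (ω N) : ℝ≥0∞) ∂μ := by
  have m1 := (Alive_dep n s l hA hN).meas
  have m2 := (Alive_dep n s l hA (show k ≤ N + 1 by omega)).meas
  have m3 := (HitAt_dep n s l hA hN).meas
  have e1 : ∫⁻ ω in Alive n s l A N, (psi n s l (ω N) : ℝ≥0∞) ∂μ =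
      ∫⁻ ω in Alive n s l A N, (psi n s l (ω (N + 1)) : ℝ≥0∞) ∂μ := by
    rw [markov hd h N _ (Alive_dep n s l hA hN) (fun v => (psi n s l v : ℝ≥0∞))]
    apply setLIntegral_congr_fun m1
    intro ω hω
    exact (psi_sum hd n s hs l (ω N) (hω.2 N le_rfl).1).symm
  have hdisj : Disjoint (Alive n s l A (N + 1)) (HitAt n s l A N) := by
    rw [Set.disjoint_left]
    rintro ω ⟨_, h1⟩ ⟨_, h2⟩
    have := (h1 (N+1) le_rfl).2
    omega
  have hsub : Alive n s l A (N + 1) ∪ HitAt n s l A N ⊆ Alive n s l A N := by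
    rintro ω (⟨h1, h2⟩ | ⟨h1, _⟩)
    · exact ⟨h1, fun i hi => h2 i (by omega)⟩
    · exact h1
  rw [e1]
  refine le_trans ?_ (lintegral_mono_set hsub)
  rw [lintegral_union m3 hdisj]
  gcongr
  rw [← setLIntegral_const]
  apply setLIntegral_mono' m3
  rintro ω ⟨_, h2⟩
  unfold psi
  exact_mod_cast (by omega : 3 * n + 2 ≤ (2 * (s * ω (N + 1) l) + 2 * n + 2).toNat)

lemma gambler (hd : 0 < d) (h : IsSRWLaw μ x) (n : ℕ) (s : ℤ) (hs : s = 1 ∨ s = -1) (l : Fin d)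
    {A : Set (ℕ → V d)} {k : ℕ} (hA : Dep k A) (c : ℕ)
    (hR : ∀ ω ∈ A, ∀ i ≤ k, 2 * (s * ω i l) < n) (hc : ∀ ω ∈ A, s * ω k l ≤ c) :
    ((3 * n + 2 : ℕ) : ℝ≥0∞) * μ (A ∩ Hit n s l) ≤ ((2 * c + 2 * n + 2 : ℕ) : ℝ≥0∞) * μ A := by
  have hsub : A ∩ Hit n s l ⊆ ⋃ m, HitAt n s l A (k + m) := by
    rintro ω ⟨h1, h2⟩
    obtain ⟨j0, hj0, hj0'⟩ := h2
    have hex : ∃ j, (n : ℤ) ≤ 2 * (s * ω j l) := ⟨j0, hj0⟩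
    set j := Nat.find hex with hj
    have hj1 : (n : ℤ) ≤ 2 * (s * ω j l) := Nat.find_spec hex
    have hjle : j ≤ j0 := Nat.find_min' hex hj0
    have hjk : k < j := by
      by_contra hh
      have := hR ω h1 j (by omega)
      omega
    rw [Set.mem_iUnion]
    refine ⟨j - 1 - k, ?_⟩
    rw [show k + (j - 1 - k) = j - 1 by omega]
    refine ⟨⟨h1, fun i hi => ⟨?_, ?_⟩⟩, by rw [show j - 1 + 1 = j by omega]; exact hj1⟩
    · have := hj0' i (by omega) l
      simp only [Pi.zero_apply, sub_zero] at this
      rw [abs_le] at this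
      rcases hs with rfl | rfl <;> omega
    · have := Nat.find_min hex (m := i) (by omega)
      omega
  have hind : ∀ M, ∑ m ∈ Finset.range M, ((3 * n + 2 : ℕ) : ℝ≥0∞) * μ (HitAt n s l A (k + m)) +
      ∫⁻ ω in Alive n s l A (k + M), (psi n s l (ω (k + M)) : ℝ≥0∞) ∂μ ≤
      ∫⁻ ω in Alive n s l A k, (psi n s l (ω k) : ℝ≥0∞) ∂μ := by
    intro M
    induction M with
    | zero => simp
    | succ M ih =>
      refine le_trans ?_ ih
      rw [Finset.sum_range_succ, add_assoc]
      gcongr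
      rw [add_comm]
      exact gambler_step hd h n s hs l hA (Nat.le_add_right k M)
  have hk : ∫⁻ ω in Alive n s l A k, (psi n s l (ω k) : ℝ≥0∞) ∂μ ≤ ((2 * c + 2 * n + 2 : ℕ) : ℝ≥0∞) * μ A := by
    have m1 := (Alive_dep n s l hA (le_refl k)).meas
    calc _ ≤ ∫⁻ ω in Alive n s l A k, ((2 * c + 2 * n + 2 : ℕ) : ℝ≥0∞) ∂μ := by
          apply setLIntegral_mono' m1
          rintro ω ⟨h1, _⟩
          have := hc ω h1
          unfold psi
          exact_mod_cast (by omega : (2 * (s * ω k l) + 2 * n + 2).toNat ≤ 2 * c + 2 * n + 2)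
      _ = ((2 * c + 2 * n + 2 : ℕ) : ℝ≥0∞) * μ (Alive n s l A k) := setLIntegral_const _ _
      _ ≤ _ := by
          gcongr
          exact fun ω hω => hω.1
  calc _ ≤ ((3 * n + 2 : ℕ) : ℝ≥0∞) * ∑' m, μ (HitAt n s l A (k + m)) := by
        gcongr
        exact (measure_mono hsub).trans (measure_iUnion_le _)
    _ = ∑' m, ((3 * n + 2 : ℕ) : ℝ≥0∞) * μ (HitAt n s l A (k + m)) := ENNReal.tsum_mul_left.symm
    _ ≤ _ := by
        apply ENNReal.tsum_le_of_sum_range_le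
        intro M
        exact le_trans (le_trans le_self_add (hind M)) hk

lemma gambler' (hd : 0 < d) (h : IsSRWLaw μ x) (n : ℕ) (s : ℤ) (hs : s = 1 ∨ s = -1) (l : Fin d)
    {A : Set (ℕ → V d)} {k : ℕ} (hk : 1 ≤ k) (hn : 10 * k ≤ n) (hA : Dep k A)
    (hR : ∀ ω ∈ A, ∀ i ≤ k, s * ω i l ≤ k) :
    μ (A ∩ Hit n s l) ≤ ENNReal.ofReal (3 / 4) * μ A := by
  have := h.1
  have h1 := gambler hd h n s hs l hA k (fun ω hω i hi => by have := hR ω hω i hi; omega)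
    (fun ω hω => hR ω hω k le_rfl)
  have h2 := ENNReal.toReal_mono (by finiteness) h1
  rw [ENNReal.toReal_mul, ENNReal.toReal_mul, ENNReal.toReal_natCast, ENNReal.toReal_natCast] at h2
  rw [← ENNReal.ofReal_toReal (measure_ne_top μ (A ∩ Hit n s l)),
    ← ENNReal.ofReal_toReal (measure_ne_top μ A), ← ENNReal.ofReal_mul (by norm_num)]
  apply ENNReal.ofReal_le_ofReal
  set a := (μ (A ∩ Hit n s l)).toReal
  have hb : 0 ≤ (μ A).toReal := ENNReal.toReal_nonneg
  set b := (μ A).toReal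
  push_cast at h2
  have hk' : (1:ℝ) ≤ k := by exact_mod_cast hk
  have hn' : 10 * (k:ℝ) ≤ n := by exact_mod_cast hn
  by_contra hc
  push Not at hc
  have h3 : (3 * (n:ℝ) + 2) * (3 / 4 * b) ≤ (3 * n + 2) * a := by gcongr
  have h4 : (3 * (n:ℝ) + 2) * (3 / 4 * b) < (3 * n + 2) * a := by gcongr
  nlinarith [mul_nonneg hb (by linarith : (0:ℝ) ≤ n - 8 * k - 2)]

lemma sum_pt (j : ℕ) (A : Set (ℕ → V d)) (hA : MeasurableSet A) [IsProbabilityMeasure μ] :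
    ∑' y : V d, μ (A ∩ {ω | ω j = y}) ≤ μ A := by
  rw [← measure_iUnion]
  · exact measure_mono (Set.iUnion_subset (fun y => Set.inter_subset_left))
  · intro y y' hne
    rw [Function.onFun, Set.disjoint_left]
    rintro ω ⟨_, h1⟩ ⟨_, h2⟩
    exact hne (h1.symm.trans h2)
  · exact fun y => hA.inter (measurableSet_eq_fun (measurable_pi_apply j) measurable_const)

lemma meet_le (A A' : Set (ℕ → V d)) (hA : MeasurableSet A) (hA' : MeasurableSet A')
    [IsProbabilityMeasure μ] [IsProbabilityMeasure μ'] (i j : ℕ) (b : ℝ≥0∞)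
    (hb : (∀ y, μ (A ∩ {ω | ω i = y}) ≤ b * μ A) ∨ (∀ y, μ' (A' ∩ {ω | ω j = y}) ≤ b * μ' A')) :
    (μ.prod μ') {p | p.1 ∈ A ∧ p.2 ∈ A' ∧ p.1 i = p.2 j} ≤ b * (μ A * μ' A') := by
  have hsub : {p : (ℕ → V d) × (ℕ → V d) | p.1 ∈ A ∧ p.2 ∈ A' ∧ p.1 i = p.2 j} ⊆
      ⋃ y : V d, (A ∩ {ω | ω i = y}) ×ˢ (A' ∩ {ω | ω j = y}) := by
    rintro p ⟨h1, h2, h3⟩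
    rw [Set.mem_iUnion]
    exact ⟨p.1 i, ⟨h1, rfl⟩, ⟨h2, h3.symm⟩⟩
  refine (measure_mono hsub).trans ((measure_iUnion_le _).trans ?_)
  simp_rw [Measure.prod_prod]
  rcases hb with hb | hb
  · calc _ ≤ ∑' y : V d, (b * μ A) * μ' (A' ∩ {ω | ω j = y}) :=
          ENNReal.tsum_le_tsum (fun y => mul_le_mul_left (hb y) _)
      _ ≤ _ := by
          rw [ENNReal.tsum_mul_left, mul_assoc]
          gcongr
          exact sum_pt j A' hA'
  · calc _ ≤ ∑' y : V d, μ (A ∩ {ω | ω i = y}) * (b * μ' A') :=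
          ENNReal.tsum_le_tsum (fun y => mul_le_mul_right (hb y) _)
      _ ≤ _ := by
          rw [ENNReal.tsum_mul_right, mul_left_comm]
          gcongr
          exact sum_pt i A hA

end part3

/-- straight path -/
def ray (z : Fin d) (s : ℤ) : ℕ → V d := fun i => Pi.single z (s * i)

lemma ray_nn (z : Fin d) (s : ℤ) (hs : s = 1 ∨ s = -1) (i : ℕ) :
    ∃ e, ray z s (i + 1) = ray z s i + stp e := by
  unfold ray stp
  rcases hs with rfl | rfl
  · exact ⟨(z, true), by rw [if_pos rfl, ← Pi.single_add]; push_cast; ring_nf⟩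
  · exact ⟨(z, false), by rw [if_neg (by simp), ← Pi.single_add]; push_cast; ring_nf⟩

lemma ray_le (z : Fin d) (s s' : ℤ) (hs : s = 1 ∨ s = -1) (hs' : s' = 1 ∨ s' = -1) (l : Fin d) (i : ℕ) :
    s' * ray z s i l ≤ i := by
  unfold ray
  by_cases h : l = z
  · subst h; rw [Pi.single_eq_same]
    rcases hs with rfl | rfl <;> rcases hs' with rfl | rfl <;> omega
  · rw [Pi.single_eq_of_ne h]; simp

lemma exitTime_eq {Q : Set (V d)} {ω : ℕ → V d} {t : ℕ} (h1 : ω t ∉ Q) (h2 : ∀ i < t, ω i ∈ Q) :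
    exitTime Q ω = t := by
  have hex : ∃ j, ω j ∉ Q := ⟨t, h1⟩
  unfold exitTime exitTimeE
  rw [dif_pos hex, ENat.toNat_natCast, Nat.find_eq_iff]
  exact ⟨h1, fun i hi => not_not.2 (h2 i hi)⟩

lemma le_eudist (v w : V d) (l : Fin d) : |(v l : ℝ) - w l| ≤ eudist v w := by
  unfold eudist
  apply Real.le_sqrt_of_sq_le
  rw [sq_abs]
  exact Finset.single_le_sum (f := fun i => ((v i : ℝ) - w i) ^ 2) (fun i _ => sq_nonneg _) (Finset.mem_univ l)

/-- the disjointness event -/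
def FS (d n : ℕ) : Set ((ℕ → V d) × (ℕ → V d)) :=
  { p : (ℕ → V d) × (ℕ → V d) |
                rangeSet 1 (exitTime (cube 0 n) p.1) p.1 ∩
                  rangeSet 1 (exitTime (cube 0 n) p.2) p.2 = ∅ }

/-- the separation event -/
noncomputable def ZS (d n : ℕ) : Set ((ℕ → V d) × (ℕ → V d)) :=
  { p : (ℕ → V d) × (ℕ → V d) |
                (n : ℝ) / 2 ≤
                  max (eudistSet (p.1 (exitTime (cube 0 n) p.1))
                        (rangeSet 1 (exitTime (cube 0 n) p.2) p.2))
                      (eudistSet (p.2 (exitTime (cube 0 n) p.2))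
                        (rangeSet 0 (exitTime (cube 0 n) p.1) p.1)) }

lemma good_of (n : ℕ) (p : (ℕ → V d) × (ℕ → V d)) (t t' : ℕ) (h0 : p.2 0 = 0)
    (ht : p.1 t ∉ cube 0 n) (htl : ∀ i < t, p.1 i ∈ cube 0 n)
    (ht' : p.2 t' ∉ cube 0 n) (htl' : ∀ i < t', p.2 i ∈ cube 0 n)
    (hdis : ∀ i j, 1 ≤ i → 1 ≤ j → i ≤ t → j ≤ t' → p.1 i ≠ p.2 j)
    (s : ℤ) (hs : s = 1 ∨ s = -1) (l : Fin d) (hL : (n : ℤ) + 1 ≤ s * p.1 t l)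
    (hH : ∀ j ≤ t', 2 * (s * p.2 j l) < n) : p ∈ FS d n ∩ ZS d n := by
  have et := exitTime_eq ht htl
  have et' := exitTime_eq ht' htl'
  constructor
  · change _ ∩ _ = ∅
    rw [et, et']
    apply Set.eq_empty_of_forall_notMem
    rintro v ⟨⟨i, hi1, hi2, hi3⟩, ⟨j, hj1, hj2, hj3⟩⟩
    exact hdis i j hi1 hj1 hi2 hj2 (hi3.trans hj3.symm)
  · change (n : ℝ) / 2 ≤ max (_ : ℝ) _
    rw [et, et']
    apply le_max_of_le_left
    apply le_csInf
    · refine ⟨_, Set.mem_image_of_mem _ ⟨t', ?_, le_rfl, rfl⟩⟩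
      by_contra hc
      have : t' = 0 := by omega
      subst this
      apply ht'; rw [h0]; intro i; simp
    · rintro r ⟨w, ⟨j, hj1, hj2, rfl⟩, rfl⟩
      refine le_trans ?_ (le_eudist _ _ l)
      have h1 := hH j hj2
      have h2 : (n : ℤ) ≤ 2 * |p.1 t l - p.2 j l| := by
        rcases hs with rfl | rfl
        · have := le_abs_self (p.1 t l - p.2 j l); omega
        · have := neg_le_abs (p.1 t l - p.2 j l); omega
      have h3 : (n : ℝ) ≤ 2 * |(p.1 t l : ℝ) - p.2 j l| := by exact_mod_cast h2
      linarith

lemma nn_coord {ω : ℕ → V d} (h : ∀ i, ∃ e, ω (i + 1) = ω i + stp e) (z : Fin d) (k m : ℕ) :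
    |ω (k + m) z - ω k z| ≤ m := by
  induction m with
  | zero => simp
  | succ m ih =>
    obtain ⟨e, he⟩ := h (k + m)
    have h1 : |stp e z| ≤ 1 := by
      unfold stp
      by_cases hz : z = e.1
      · rw [hz, Pi.single_eq_same]; split_ifs <;> simp
      · rw [Pi.single_eq_of_ne hz]; simp
    rw [← add_assoc, he, Pi.add_apply]
    rw [abs_le] at *
    push_cast
    constructor <;> linarith [ih.1, ih.2, h1.1, h1.2]

lemma support {ω ω' : ℕ → V d} (h : ∀ i, ∃ e, ω (i + 1) = ω i + stp e)
    (h' : ∀ i, ∃ e, ω' (i + 1) = ω' i + stp e) (z : Fin d) (k i j : ℕ)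
    (hA : ω ∈ cyl k (ray z 1)) (hA' : ω' ∈ cyl k (ray z (-1))) (hi : 1 ≤ i) (hj : 1 ≤ j)
    (he : ω i = ω' j) : k ≤ (i - k) + (j - k) := by
  have r : ∀ m ≤ k, ω m z = m := fun m hm => by rw [hA m hm]; simp [ray]
  have r' : ∀ m ≤ k, ω' m z = -m := fun m hm => by rw [hA' m hm]; simp [ray]
  have a1 : i ≤ k ∧ ω i z = i ∨ k < i ∧ (k:ℤ) - (i - k : ℕ) ≤ ω i z := by
    by_cases hik : i ≤ k
    · exact Or.inl ⟨hik, r i hik⟩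
    · right
      have := nn_coord h z k (i - k)
      rw [show k + (i - k) = i by omega, r k le_rfl, abs_le] at this
      exact ⟨by omega, by linarith [this.1]⟩
  have a2 : j ≤ k ∧ ω' j z = -j ∨ k < j ∧ ω' j z ≤ -(k:ℤ) + (j - k : ℕ) := by
    by_cases hjk : j ≤ k
    · exact Or.inl ⟨hjk, r' j hjk⟩
    · right
      have := nn_coord h' z k (j - k)
      rw [show k + (j - k) = j by omega, r' k le_rfl, abs_le] at this
      exact ⟨by omega, by linarith [this.2]⟩
  rw [he] at a1
  omega

/-- summable weight -/
noncomputable def wt (K : ℝ) (p : ℕ × ℕ) : ℝ :=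
  K * ((6:ℝ) ^ (5/4:ℝ) * (6:ℝ) ^ (5/4:ℝ)) * ((1 / (p.1:ℝ) ^ (5/4:ℝ)) * (1 / (p.2:ℝ) ^ (5/4:ℝ)))

lemma wt_summable (K : ℝ) : Summable (wt K) := by
  unfold wt
  apply Summable.mul_left
  have := Real.summable_one_div_nat_rpow (p := 5/4).2 (by norm_num)
  exact this.mul_of_nonneg this (fun i => by positivity) (fun i => by positivity)

lemma wt_bound (K : ℝ) (hK : 0 < K) (i j M : ℕ) (hi : 1 ≤ i) (hj : 1 ≤ j) (hM : i + j ≤ 6 * M) :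
    K / (√(M:ℝ)) ^ 5 ≤ wt K (i, j) := by
  have hi' : (1:ℝ) ≤ i := by exact_mod_cast hi
  have hj' : (1:ℝ) ≤ j := by exact_mod_cast hj
  have hM0 : (0:ℝ) < M := by exact_mod_cast (by omega : 0 < M)
  have e : (√(M:ℝ)) ^ 5 = (M:ℝ) ^ (5/4:ℝ) * (M:ℝ) ^ (5/4:ℝ) := by
    rw [← Real.rpow_add hM0, Real.sqrt_eq_rpow, ← Real.rpow_natCast, ← Real.rpow_mul hM0.le]
    norm_num
  have key : ∀ a : ℕ, 1 ≤ a → a ≤ 6 * M → 1 / (M:ℝ) ^ (5/4:ℝ) ≤ (6:ℝ) ^ (5/4:ℝ) * (1 / (a:ℝ) ^ (5/4:ℝ)) := by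
    intro a ha haM
    have ha' : (0:ℝ) < a := by exact_mod_cast ha
    rw [mul_one_div, div_le_div_iff₀ (by positivity) (by positivity), one_mul, ← Real.mul_rpow (by norm_num) hM0.le]
    apply Real.rpow_le_rpow ha'.le _ (by norm_num)
    exact_mod_cast haM
  have k1 := key i hi (by omega)
  have k2 := key j hj (by omega)
  have : K / (√(M:ℝ)) ^ 5 = K * ((1 / (M:ℝ) ^ (5/4:ℝ)) * (1 / (M:ℝ) ^ (5/4:ℝ))) := by
    rw [e]; field_simp
  rw [this]
  unfold wt
  calc _ ≤ K * (((6:ℝ) ^ (5/4:ℝ) * (1 / (i:ℝ) ^ (5/4:ℝ))) * ((6:ℝ) ^ (5/4:ℝ) * (1 / (j:ℝ) ^ (5/4:ℝ)))) := by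
        gcongr
    _ = _ := by simp only []; ring

lemma wt_tail (K : ℝ) : ∃ k : ℕ, 1 ≤ k ∧
    ∑' p : ℕ × ℕ, (if k ≤ p.1 + p.2 then ENNReal.ofReal (wt K p) else 0) ≤ ENNReal.ofReal (1/8) := by
  have hfin : ∑' p : ℕ × ℕ, ENNReal.ofReal (wt K p) ≠ ∞ := (wt_summable K).tsum_ofReal_ne_top
  have ht := ENNReal.tendsto_tsum_compl_atTop_zero hfin
  obtain ⟨s, hs⟩ := ((tendsto_order.1 ht).2 (ENNReal.ofReal (1/8)) (by simp)).exists
  refine ⟨s.sup (fun p => p.1 + p.2) + 1, by omega, ?_⟩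
  refine le_trans ?_ hs.le
  rw [show (∑' b : { x // x ∉ s }, ENNReal.ofReal (wt K b)) = ∑' b, Set.indicator {x | x ∉ s} (fun p => ENNReal.ofReal (wt K p)) b from
    tsum_subtype {x | x ∉ s} (fun p => ENNReal.ofReal (wt K p))]
  apply ENNReal.tsum_le_tsum
  intro p
  split_ifs with h
  · rw [Set.indicator_of_mem]
    intro hp
    have : p.1 + p.2 ≤ s.sup (fun p => p.1 + p.2) := Finset.le_sup (f := fun p : ℕ × ℕ => p.1 + p.2) hp
    omega
  · simp

lemma ray_mass {μ : Measure (ℕ → V d)} (h : IsSRWLaw μ 0) (z : Fin d) (s : ℤ) (hs : s = 1 ∨ s = -1) (k : ℕ) :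
    μ (cyl k (ray z s)) = (2 * (d : ℝ≥0∞))⁻¹ ^ k :=
  cyl_mass h k _ (by simp [ray]) (fun i _ => ray_nn z s hs i)

lemma ray_cube (z : Fin d) (s : ℤ) (hs : s = 1 ∨ s = -1) (n i : ℕ) (hi : i ≤ n) : ray z s i ∈ cube 0 n := by
  intro l
  have h1 := ray_le z s 1 hs (Or.inl rfl) l i
  have h2 := ray_le z s (-1) hs (Or.inr rfl) l i
  rw [abs_le]
  simp only [Pi.zero_apply, sub_zero]
  constructor <;> omega

lemma ray_not_cube (z : Fin d) (s : ℤ) (hs : s = 1 ∨ s = -1) (n : ℕ) : ray z s (n + 1) ∉ cube 0 n := by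
  intro h
  have := h z
  rw [abs_le] at this
  simp only [ray, Pi.single_eq_same, Pi.zero_apply, sub_zero] at this
  rcases hs with rfl | rfl <;> omega

lemma small_n {μ μ' : Measure (ℕ → V d)} (hd : 0 < d) (h : IsSRWLaw μ 0) (h' : IsSRWLaw μ' 0) (n : ℕ) (hn : 1 ≤ n) :
    (2 * (d : ℝ≥0∞))⁻¹ ^ (n + 1) * (2 * (d : ℝ≥0∞))⁻¹ ^ (n + 1) ≤ (μ.prod μ') (FS d n ∩ ZS d n) := by
  have := h.1; have := h'.1
  set z : Fin d := ⟨0, hd⟩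
  have e : (2 * (d : ℝ≥0∞))⁻¹ ^ (n + 1) * (2 * (d : ℝ≥0∞))⁻¹ ^ (n + 1) =
      (μ.prod μ') (cyl (n + 1) (ray z 1) ×ˢ cyl (n + 1) (ray z (-1))) := by
    rw [Measure.prod_prod, ray_mass h z 1 (Or.inl rfl), ray_mass h' z (-1) (Or.inr rfl)]
  rw [e]
  apply measure_mono
  rintro p ⟨h1, h2⟩
  apply good_of n p (n + 1) (n + 1) (l := z) (s := 1) (hs := Or.inl rfl)
  · rw [h2 0 (by omega)]; simp [ray]
  · rw [h1 _ le_rfl]; exact ray_not_cube z 1 (Or.inl rfl) n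
  · intro i hi; rw [h1 i (by omega)]; exact ray_cube z 1 (Or.inl rfl) n i (by omega)
  · rw [h2 _ le_rfl]; exact ray_not_cube z (-1) (Or.inr rfl) n
  · intro i hi; rw [h2 i (by omega)]; exact ray_cube z (-1) (Or.inr rfl) n i (by omega)
  · intro i j hi hj hi' hj' he
    rw [h1 i hi', h2 j hj'] at he
    have := congrFun he z
    simp only [ray, Pi.single_eq_same] at this
    omega
  · rw [h1 _ le_rfl]; simp [ray]
  · intro j hj
    rw [h2 j hj]; simp only [ray, Pi.single_eq_same]; omega

lemma face_exists (n : ℕ) (v : V d) (hv : v ∉ cube 0 n) :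
    ∃ q : ℤ × Fin d, (q.1 = 1 ∨ q.1 = -1) ∧ (n : ℤ) + 1 ≤ q.1 * v q.2 := by
  have : ∃ l, ¬ |v l - (0 : V d) l| ≤ (n : ℤ) := by
    by_contra hc
    push Not at hc
    exact hv hc
  obtain ⟨l, hl⟩ := this
  simp only [Pi.zero_apply, sub_zero, not_le] at hl
  rcases lt_abs.1 hl with h | h
  · exact ⟨(1, l), Or.inl rfl, by simp only []; omega⟩
  · exact ⟨(-1, l), Or.inr rfl, by simp only []; omega⟩

/-- first exit at time t in v -/
def Ex (n t : ℕ) (v : V d) : Set (ℕ → V d) := {ω | ω t = v ∧ v ∉ cube 0 n ∧ ∀ i < t, ω i ∈ cube 0 n}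

lemma Ex_dep (n t : ℕ) (v : V d) : Dep t (Ex n t v) := by
  rintro ω ω' h ⟨h1, h2, h3⟩
  exact ⟨by rw [← h t le_rfl]; exact h1, h2, fun i hi => by rw [← h i hi.le]; exact h3 i hi⟩

lemma first_exit {n : ℕ} {ω : ℕ → V d} (h : ∃ t, ω t ∉ cube 0 n) :
    ∃ t, ω t ∉ cube 0 n ∧ ∀ i < t, ω i ∈ cube 0 n :=
  ⟨Nat.find h, Nat.find_spec h, fun i hi => not_not.1 (Nat.find_min h hi)⟩

lemma large_n (hd : 5 ≤ d) : ∃ k : ℕ, 1 ≤ k ∧ ∀ n : ℕ, 10 * k ≤ n →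
    ∀ μ μ' : Measure (ℕ → V d), IsSRWLaw μ 0 → IsSRWLaw μ' 0 →
    (2 * (d : ℝ≥0∞))⁻¹ ^ k * (2 * (d : ℝ≥0∞))⁻¹ ^ k * 8⁻¹ ≤ (μ.prod μ') (FS d n ∩ ZS d n) := by
  obtain ⟨K, hK0, hK⟩ := hk_bound hd
  obtain ⟨k, hk1, hk2⟩ := wt_tail K
  refine ⟨k, hk1, fun n hn μ μ' h h' => ?_⟩
  have := h.1; have := h'.1
  have hd0 : 0 < d := by omega
  set z : Fin d := ⟨0, hd0⟩
  set A := cyl k (ray z 1) with hA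
  set A' := cyl k (ray z (-1)) with hA'
  have mA : μ A = _ := ray_mass h z 1 (Or.inl rfl) k
  have mA' : μ' A' = _ := ray_mass h' z (-1) (Or.inr rfl) k
  have eP : (2 * (d : ℝ≥0∞))⁻¹ ^ k * (2 * (d : ℝ≥0∞))⁻¹ ^ k = μ A * μ' A' := by rw [mA, mA']
  rw [eP]
  have aes : MeasurableSet A := cyl_meas _ _
  have aes' : MeasurableSet A' := cyl_meas _ _
  have hfc : ∀ v : V d, ∃ q : ℤ × Fin d, (q.1 = 1 ∨ q.1 = -1) ∧ (v ∉ cube 0 n → (n : ℤ) + 1 ≤ q.1 * v q.2) := by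
    intro v
    by_cases hv : v ∈ cube 0 n
    · exact ⟨(1, z), Or.inl rfl, fun h => absurd hv h⟩
    · obtain ⟨q, h1, h2⟩ := face_exists n v hv
      exact ⟨q, h1, fun _ => h2⟩
  choose fc hfc1 hfc2 using hfc
  -- intersections
  let D : ℕ × ℕ → Set ((ℕ → V d) × (ℕ → V d)) := fun q =>
    {p | (p.1 ∈ A ∧ p.2 ∈ A' ∧ p.1 q.1 = p.2 q.2) ∧ 1 ≤ q.1 ∧ 1 ≤ q.2}
  have nn1 : ∀ᵐ p ∂(μ.prod μ'), ∀ i, ∃ e, p.1 (i + 1) = p.1 i + stp e := by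
    filter_upwards [Measure.quasiMeasurePreserving_fst.ae (ae_nn' hd0 h)] with p hp using hp.2
  have nn2 : ∀ᵐ p ∂(μ.prod μ'), ∀ i, ∃ e, p.2 (i + 1) = p.2 i + stp e := by
    filter_upwards [Measure.quasiMeasurePreserving_snd.ae (ae_nn' hd0 h')] with p hp using hp.2
  have hD : ∀ q, (μ.prod μ') (D q) ≤
      (if k ≤ q.1 + q.2 then ENNReal.ofReal (wt K q) else 0) * (μ A * μ' A') := by
    rintro ⟨i, j⟩
    by_cases hc : 1 ≤ i ∧ 1 ≤ j ∧ k ≤ (i - k) + (j - k)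
    · obtain ⟨hi, hj, hkk⟩ := hc
      rw [if_pos (by simp only []; omega)]
      refine (measure_mono (fun p hp => hp.1)).trans
        (meet_le A A' aes aes' i j (ENNReal.ofReal (wt K (i, j))) ?_)
      rcases le_total (j - k) (i - k) with hij | hij
      · left
        intro y
        refine (point_le hd0 h k A (cyl_dep _ _) (ray z 1 k) (fun ω hω => hω k le_rfl) K hK i (by omega) y).trans ?_
        gcongr
        exact wt_bound K hK0 i j (i - k) hi hj (by omega)
      · right
        intro y
        refine (point_le hd0 h' k A' (cyl_dep _ _) (ray z (-1) k) (fun ω hω => hω k le_rfl) K hK j (by omega) y).trans ?_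
        gcongr
        exact wt_bound K hK0 i j (j - k) hi hj (by omega)
    · have : (μ.prod μ') (D (i, j)) = 0 := by
        rw [measure_eq_zero_iff_ae_notMem]
        filter_upwards [nn1, nn2] with p h1 h2
        rintro ⟨⟨h3, h4, h5⟩, h6, h7⟩
        exact hc ⟨h6, h7, support h1 h2 z k i j h3 h4 h6 h7 h5⟩
      rw [this]; exact zero_le
  have hD' : (μ.prod μ') (⋃ q, D q) ≤ ENNReal.ofReal (1/8) * (μ A * μ' A') := by
    refine (measure_iUnion_le _).trans ((ENNReal.tsum_le_tsum hD).trans ?_)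
    rw [ENNReal.tsum_mul_right]
    gcongr
  -- exit faces
  let B : ℕ × V d → Set ((ℕ → V d) × (ℕ → V d)) := fun q =>
    (A ∩ Ex n q.1 q.2) ×ˢ (A' ∩ Hit n (fc q.2).1 (fc q.2).2)
  have hB : (μ.prod μ') (⋃ q, B q) ≤ ENNReal.ofReal (3/4) * (μ A * μ' A') := by
    refine (measure_iUnion_le _).trans ?_
    calc _ ≤ ∑' q : ℕ × V d, μ (A ∩ Ex n q.1 q.2) * (ENNReal.ofReal (3/4) * μ' A') := by
          apply ENNReal.tsum_le_tsum
          intro q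
          simp only [B]
          rw [Measure.prod_prod]
          gcongr
          apply gambler' hd0 h' n _ (hfc1 _) _ hk1 hn (cyl_dep _ _)
          intro ω hω i hi
          rw [hω i hi]
          have := ray_le z (-1) (fc q.2).1 (Or.inr rfl) (hfc1 _) (fc q.2).2 i
          omega
      _ ≤ _ := by
          rw [ENNReal.tsum_mul_right, mul_left_comm]
          gcongr
          rw [← measure_iUnion]
          · exact measure_mono (Set.iUnion_subset (fun y => Set.inter_subset_left))
          · intro q q' hne
            rw [Function.onFun, Set.disjoint_left]
            rintro ω ⟨_, h1, h2, h3⟩ ⟨_, h1', h2', h3'⟩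
            have e : q.1 = q'.1 := by
              rcases lt_trichotomy q.1 q'.1 with hlt | heq | hlt
              · exact absurd (h3' _ hlt) (by rw [h1]; exact h2)
              · exact heq
              · exact absurd (h3 _ hlt) (by rw [h1']; exact h2')
            exact hne (Prod.ext e (by rw [← h1, ← h1', e]))
          · exact fun q => aes.inter (Ex_dep _ _ _).meas
  -- exits
  let N : Set ((ℕ → V d) × (ℕ → V d)) := {p | ¬ ((∃ t, p.1 t ∉ cube 0 n) ∧ (∃ t, p.2 t ∉ cube 0 n))}
  have hN : (μ.prod μ') N = 0 := by
    have h1 : ∀ᵐ p ∂(μ.prod μ'), ∃ t, p.1 t ∉ cube 0 n :=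
      Measure.quasiMeasurePreserving_fst.ae (exit_ae hd h n)
    have h2 : ∀ᵐ p ∂(μ.prod μ'), ∃ t, p.2 t ∉ cube 0 n :=
      Measure.quasiMeasurePreserving_snd.ae (exit_ae hd h' n)
    rw [measure_eq_zero_iff_ae_notMem]
    filter_upwards [h1, h2] with p h1 h2 hp
    exact hp ⟨h1, h2⟩
  have hcov : A ×ˢ A' ⊆ (FS d n ∩ ZS d n) ∪ (N ∪ ((⋃ q, D q) ∪ (⋃ q, B q))) := by
    rintro p ⟨h1, h2⟩
    by_contra hc
    simp only [Set.mem_union, not_or] at hc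
    obtain ⟨c1, c2, c3, c4⟩ := hc
    have c2' : (∃ t, p.1 t ∉ cube 0 n) ∧ (∃ t, p.2 t ∉ cube 0 n) := not_not.1 c2
    obtain ⟨t, ht, htl⟩ := first_exit c2'.1
    obtain ⟨t', ht', htl'⟩ := first_exit c2'.2
    apply c1
    apply good_of n p t t' _ ht htl ht' htl' _ (fc (p.1 t)).1 (hfc1 _) (fc (p.1 t)).2 (hfc2 _ ht)
    · intro j hj
      by_contra hcc
      apply c4
      rw [Set.mem_iUnion]
      exact ⟨(t, p.1 t), ⟨h1, rfl, ht, htl⟩, ⟨h2, j, not_lt.1 hcc, fun i hi => htl' i (by omega)⟩⟩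
    · rw [h2 0 (by omega)]; simp [ray]
    · intro i j hi hj _ _ he
      apply c3
      rw [Set.mem_iUnion]
      exact ⟨(i, j), ⟨h1, h2, he⟩, hi, hj⟩
  have htot : μ A * μ' A' ≤ (μ.prod μ') (FS d n ∩ ZS d n) +
      (0 + (ENNReal.ofReal (1/8) * (μ A * μ' A') + ENNReal.ofReal (3/4) * (μ A * μ' A'))) := by
    rw [← Measure.prod_prod]
    refine (measure_mono hcov).trans ((measure_union_le _ _).trans ?_)
    gcongr
    refine (measure_union_le _ _).trans ?_
    rw [Measure.prod_prod]
    gcongr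
    · exact hN.le
    · refine (measure_union_le _ _).trans ?_
      gcongr
  have hP : μ A * μ' A' ≠ ∞ := by finiteness
  have hG : (μ.prod μ') (FS d n ∩ ZS d n) ≠ ∞ := measure_ne_top _ _
  have hr := ENNReal.toReal_mono (by finiteness) htot
  rw [zero_add, ← add_mul, ← ENNReal.ofReal_add (by norm_num) (by norm_num),
    ENNReal.toReal_add hG (by finiteness), ENNReal.toReal_mul (a := ENNReal.ofReal _),
    ENNReal.toReal_ofReal (by norm_num)] at hr
  rw [← ENNReal.toReal_le_toReal (by finiteness) hG, ENNReal.toReal_mul (b := 8⁻¹), ENNReal.toReal_inv]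
  norm_num at hr ⊢
  linarith

/-- **Separation lemma** (Lemma 2.2).  Let `d ≥ 5`.  There is `c₁ > 0`, depending only
on `d`, such that for all `n ≥ 1`, if `S, S'` are independent simple random walks from
`0`, `T_n, T'_n` their exit times from `Q_n`,
`F_n = { S[1,T_n] ∩ S'[1,T'_n] = ∅ }` and
`Z_n = max( dist(S(T_n), S'[1,T'_n]), dist(S'(T'_n), S[0,T_n]) )`, then
`P( Z_n ≥ n/2 | F_n ) ≥ c₁`. -/
theorem separation_lemma :
    ∀ d : ℕ, 5 ≤ d → ∃ c₁ : ℝ, 0 < c₁ ∧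
      ∀ n : ℕ, 1 ≤ n →
      ∀ μ μ' : Measure (ℕ → V d), IsSRWLaw μ 0 → IsSRWLaw μ' 0 →
        c₁ ≤ (ProbabilityTheory.cond (μ.prod μ')
            { p : (ℕ → V d) × (ℕ → V d) |
                rangeSet 1 (exitTime (cube 0 n) p.1) p.1 ∩
                  rangeSet 1 (exitTime (cube 0 n) p.2) p.2 = ∅ }
            { p : (ℕ → V d) × (ℕ → V d) |
                (n : ℝ) / 2 ≤
                  max (eudistSet (p.1 (exitTime (cube 0 n) p.1))
                        (rangeSet 1 (exitTime (cube 0 n) p.2) p.2))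
                      (eudistSet (p.2 (exitTime (cube 0 n) p.2))
                        (rangeSet 0 (exitTime (cube 0 n) p.1) p.1)) }).toReal := by
  intro d hd
  obtain ⟨k, hk, hlarge⟩ := large_n (d := d) hd
  have hd0 : 0 < d := by omega
  set q : ℝ≥0∞ := (2 * (d : ℝ≥0∞))⁻¹ with hq
  have hq0 : q ≠ 0 := by rw [hq]; simp; finiteness
  have hq1 : q ≤ 1 := by
    rw [hq, ENNReal.inv_le_one]
    exact_mod_cast (by omega : 1 ≤ 2 * d)
  have hqt : q ≠ ∞ := ne_top_of_le_ne_top (by simp) hq1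
  have hC0 : q ^ (20 * k) * 8⁻¹ ≠ 0 := mul_ne_zero (pow_ne_zero _ hq0) (by simp)
  have hCt : q ^ (20 * k) * 8⁻¹ ≠ ∞ := by finiteness
  refine ⟨(q ^ (20 * k) * 8⁻¹).toReal, ENNReal.toReal_pos hC0 hCt, ?_⟩
  intro n hn μ μ' h h'
  have := h.1
  have := h'.1
  have hlow : q ^ (20 * k) * 8⁻¹ ≤ (μ.prod μ') (FS d n ∩ ZS d n) := by
    by_cases hnk : 10 * k ≤ n
    · refine le_trans ?_ (hlarge n hnk μ μ' h h')
      rw [← pow_add]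
      gcongr ?_ * 8⁻¹
      exact pow_le_pow_right_of_le_one' hq1 (by omega)
    · refine le_trans ?_ (small_n hd0 h h' n hn)
      rw [← pow_add]
      refine (mul_le_of_le_one_right (by simp) (by simp)).trans ?_
      exact pow_le_pow_right_of_le_one' hq1 (by omega)
  change _ ≤ (ProbabilityTheory.cond (μ.prod μ') (FS d n) (ZS d n)).toReal
  have hF0 : (μ.prod μ') (FS d n) ≠ 0 := by
    intro h0
    have := hlow.trans (measure_mono Set.inter_subset_left)
    rw [h0] at this
    exact hC0 (le_antisymm this zero_le)
  have := ProbabilityTheory.cond_isProbabilityMeasure hF0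
  apply ENNReal.toReal_mono (measure_ne_top _ _)
  refine hlow.trans ?_
  unfold ProbabilityTheory.cond
  rw [Measure.smul_apply, smul_eq_mul, Set.inter_comm]
  refine (Measure.le_restrict_apply _ _).trans ?_
  exact le_mul_of_one_le_left (by simp) (ENNReal.one_le_inv.2 prob_le_one)

end USFPaper
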